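/- arXiv:2011.03033 — 7 statements merged into one kernel-verified Lean document; each statement's English description precedes it below -/
import Mathlib

section
/- Let D be a symmetric cycle in the hypercube graph H(t,2) and let T be any vertex of {1,-1}^t. Then there exists a unique row vector x = (x_1,...,x_t) in {-1,0,1}^t such that T = sum_{i in [t]} x_i * D^{i-1}. Moreover, the set Q(T,D) := { x_i * D^{i-1} : x_i != 0 } is the unique inclusion-minimal subset of the vertex sequence V(D) whose members sum to T in R^t; its cardinality is odd; and sum_{Q in Q(T,D)} <T,Q> = t. -/
open Finset

noncomputable section

/-- Row vectors of `ℝ^t`. -/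
abbrev Vec (t : ℕ) := Fin t → ℝ

/-- `T` is a vertex of the discrete hypercube `{1,-1}^t`. -/
def IsPMVertex {t : ℕ} (T : Vec t) : Prop := ∀ i, T i = 1 ∨ T i = -1

/-- `T` is a vertex of the discrete hypercube `{0,1}^t`. -/
def Is01Vertex {t : ℕ} (T : Vec t) : Prop := ∀ i, T i = 0 ∨ T i = 1

open Classical in
/-- Hamming distance between two vectors. -/
def hamming {t : ℕ} (X Y : Vec t) : ℕ :=
  (Finset.univ.filter fun i => X i ≠ Y i).card

/-- The standard scalar product on `ℝ^t`. -/
def sprod {t : ℕ} (X Y : Vec t) : ℝ := ∑ i, X i * Y i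

open Classical in
/-- The cardinality of the negative part `T⁻ = {e : T e = -1}` of `T`. -/
def negCard {t : ℕ} (T : Vec t) : ℕ :=
  (Finset.univ.filter fun i => T i = -1).card

open Classical in
/-- The Hamming weight (number of coordinates equal to `1`) of a `0/1`-vector. -/
def hwt01 {t : ℕ} (T : Vec t) : ℕ :=
  (Finset.univ.filter fun i => T i = 1).card

/-- `D` (read as a `2t`-periodic sequence `D^0, D^1, …`) is a symmetric cycle in the
hypercube graph `H(t,2)` on the vertex set `{1,-1}^t`: all `D^k` are vertices,
consecutive members are adjacent (Hamming distance `1`), the `2t` members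
`D^0, …, D^{2t-1}` are pairwise distinct, and `D^{k+t} = -D^k` for `0 ≤ k ≤ t-1`. -/
structure IsSymCycle (t : ℕ) (D : ℕ → Vec t) : Prop where
  vertex : ∀ k, IsPMVertex (D k)
  periodic : ∀ k, D (k + 2 * t) = D k
  adj : ∀ k, hamming (D k) (D (k + 1)) = 1
  inj : ∀ k l, k < 2 * t → l < 2 * t → D k = D l → k = l
  symm : ∀ k, k ≤ t - 1 → D (k + t) = -(D k)

/-- `D` is a symmetric cycle in the hypercube graph on the vertex set `{0,1}^t`:
here `D^{k+t} = (1,…,1) - D^k` for `0 ≤ k ≤ t-1`. -/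
structure IsSymCycle01 (t : ℕ) (D : ℕ → Vec t) : Prop where
  vertex : ∀ k, Is01Vertex (D k)
  periodic : ∀ k, D (k + 2 * t) = D k
  adj : ∀ k, hamming (D k) (D (k + 1)) = 1
  inj : ∀ k l, k < 2 * t → l < 2 * t → D k = D l → k = l
  symm : ∀ k, k ≤ t - 1 → D (k + t) = (fun _ => 1) - D k

open Classical in
/-- The vertex sequence `V(D) = (D^0, …, D^{2t-1})` of a cycle, as a finset. -/
def VD (t : ℕ) (D : ℕ → Vec t) : Finset (Vec t) :=
  (Finset.range (2 * t)).image D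

/-- `Q` is an inclusion-minimal subset of `V(D)` whose members sum to `T` (in `ℝ^t`). -/
def IsMinDecomp (t : ℕ) (D : ℕ → Vec t) (T : Vec t) (Q : Finset (Vec t)) : Prop :=
  Q ⊆ VD t D ∧ (∑ q ∈ Q, q) = T ∧
    ∀ Q' : Finset (Vec t), Q' ⊆ VD t D → (∑ q ∈ Q', q) = T → ¬Q' ⊂ Q

/-- The vertex `T_S ∈ {1,-1}^t` whose negative part is `S`. -/
def topeOf (t : ℕ) (S : Finset (Fin t)) : Vec t := fun i => if i ∈ S then -1 else 1

/-- `x` is a coordinate vector of `T` w.r.t. `(D^0, …, D^{t-1})` with all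
components in `{-1,0,1}`; by uniqueness this is the vector `x(T,D)`. -/
def IsXVec (t : ℕ) (D : ℕ → Vec t) (T : Vec t) (x : Fin t → ℝ) : Prop :=
  (∀ i, x i = -1 ∨ x i = 0 ∨ x i = 1) ∧ T = ∑ i : Fin t, x i • D (i : ℕ)

open Classical in
/-- The `{0,1}`-decomposition equation
`T = -(|Q|-1)/2 • (1,…,1) + ∑_{q ∈ Q, q ≠ 0} q`. -/
def Decomp01 (t : ℕ) (T : Vec t) (Q : Finset (Vec t)) : Prop :=
  T = (-(((Q.card : ℝ) - 1) / 2)) • (fun _ => 1 : Vec t) +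
    ∑ q ∈ Q.filter (fun q => q ≠ (0 : Vec t)), q

/-- `R^k` for `0 ≤ k ≤ t-1`: the all-ones vector with the first `k` coordinates negated. -/
def Rvec (t : ℕ) (k : ℕ) : Vec t := fun i => if (i : ℕ) < k then -1 else 1

/-- The distinguished symmetric cycle `R` in `H(t,2)`:
`R^0 = (1,…,1)`, `R^s = {}_{-[s]}R^0` for `1 ≤ s ≤ t-1`, and `R^{k+t} = -R^k`. -/
def Rcyc (t : ℕ) (k : ℕ) : Vec t :=
  if k % (2 * t) < t then Rvec t (k % (2 * t)) else -(Rvec t (k % (2 * t) - t))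

/-- `q(A) = ℓ`: an (automatically, the unique) inclusion-minimal subset of `V(R)`
summing to `T_A` has cardinality `ℓ`. -/
def qIs (t : ℕ) (A : Finset (Fin t)) (ℓ : ℕ) : Prop :=
  ∃ Q : Finset (Vec t), IsMinDecomp t (Rcyc t) (topeOf t A) Q ∧ Q.card = ℓ

/-- `c(m;n) = binom(n-1, m-1)`, the number of compositions of `n` into `m` positive
parts (zero whenever `m = 0` or `n ≤ 0`). -/
def comp (m : ℕ) (n : ℤ) : ℕ :=
  if 1 ≤ m ∧ 1 ≤ n then ((n - 1).toNat).choose (m - 1) else 0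

/-- The number of ternary Smirnov words (words with no two equal adjacent letters)
over the alphabet `(θ, α, β) = (0, 1, 2)` with Parikh vector `(k, i, j)`
(that is, `k` letters `θ`, `i` letters `α`, `j` letters `β`), starting with the
letter `s'` and ending with the letter `s''`. -/
def Tm (s' s'' : Fin 3) (k i j : ℕ) : ℕ :=
  Set.ncard { w : List (Fin 3) | List.Chain' (· ≠ ·) w ∧
    w.count 0 = k ∧ w.count 1 = i ∧ w.count 2 = j ∧
    w.head? = some s' ∧ w.getLast? = some s'' }

/-- The number of Smirnov words over the alphabet `(θ, α, β, γ) = (0, 1, 2, 3)` with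
Parikh vector `(k, i, j, h)`, starting with `s'` and ending with `s''`. -/
def Fr (s' s'' : Fin 4) (k i j h : ℕ) : ℕ :=
  Set.ncard { w : List (Fin 4) | List.Chain' (· ≠ ·) w ∧
    w.count 0 = k ∧ w.count 1 = i ∧ w.count 2 = j ∧ w.count 3 = h ∧
    w.head? = some s' ∧ w.getLast? = some s'' }

theorem aux_flip (t : ℕ) (D : ℕ → Vec t) (hD : IsSymCycle t D) (ht : 3 ≤ t) :
    ∃ e : Fin t → Fin t, Function.Bijective e ∧
      ∀ (j : Fin t) (k : ℕ), k ≤ t → D k (e j) = if k ≤ (j : ℕ) then D 0 (e j) else - D 0 (e j) := by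
  classical
  have h1 : ∀ k, ∃ a : Fin t, ∀ c, D k c ≠ D (k + 1) c ↔ c = a := by
    intro k
    have := hD.adj k
    unfold hamming at this
    obtain ⟨a, ha⟩ := Finset.card_eq_one.mp this
    refine ⟨a, fun c => ?_⟩
    have := Finset.ext_iff.mp ha c
    simpa using this
  choose e he using h1
  have ht0 : D t = - D 0 := by simpa using hD.symm 0 (by omega)
  have hne : ∀ c, D 0 c ≠ - D 0 c := by
    intro c
    rcases hD.vertex 0 c with h | h <;> rw [h] <;> norm_num
  have hsurj : Function.Surjective (fun j : Fin t => e j) := by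
    intro c
    by_contra hc
    push Not at hc
    have : ∀ k, k ≤ t → D k c = D 0 c := by
      intro k
      induction k with
      | zero => simp
      | succ k ih =>
        intro hk
        rw [← ih (by omega)]
        by_contra h
        exact hc ⟨k, by omega⟩ ((he k c).mp (fun h' => h h'.symm)).symm
    have h2 := this t le_rfl
    rw [ht0] at h2
    exact hne c h2.symm
  have hbij : Function.Bijective (fun j : Fin t => e j) :=
    ⟨Finite.injective_iff_surjective.mpr hsurj, hsurj⟩
  refine ⟨fun j => e j, hbij, ?_⟩
  intro j k
  induction k with
  | zero => simp
  | succ k ih =>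
    intro hk
    have ih := ih (by omega)
    by_cases hkj : k = j
    · have h3 := (he k (e j)).mpr (by rw [hkj])
      simp only [hkj, le_refl, if_true] at ih h3 ⊢
      rw [if_neg (by omega)]
      rw [ih] at h3
      rcases hD.vertex 0 (e j) with h | h <;> rcases hD.vertex (j+1) (e j) with h' | h' <;>
        simp_all
    · have h3 : D k (e j) = D (k+1) (e j) := by
        by_contra h
        have := (he k _).mp h
        have := @hbij.1 j ⟨k, by omega⟩ this
        exact hkj (by rw [this])
      rw [← h3, ih]
      split_ifs <;> first | rfl | omega

/-- coordinates are determined -/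
theorem aux_coord (t : ℕ) (D : ℕ → Vec t) (hD : IsSymCycle t D) (ht : 3 ≤ t) :
    ∀ i : Fin t, ∃ (a b : Fin t) (u v : ℝ), (u = 1 ∨ u = -1) ∧ (v = 1 ∨ v = -1) ∧
      ∀ x : Fin t → ℝ, 2 * x i = u * (∑ i : Fin t, x i • D (i : ℕ)) a +
        v * (∑ i : Fin t, x i • D (i : ℕ)) b := by
  obtain ⟨e, hb, he⟩ := aux_flip t D hD ht
  have key : ∀ (x : Fin t → ℝ) (j : Fin t), D 0 (e j) * (∑ i : Fin t, x i • D (i : ℕ)) (e j)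
      = ∑ i : Fin t, x i * (if (i : ℕ) ≤ (j : ℕ) then 1 else -1) := by
    intro x j
    have h0 : D 0 (e j) * D 0 (e j) = 1 := by
      rcases hD.vertex 0 (e j) with h | h <;> rw [h] <;> norm_num
    rw [Finset.sum_apply, Finset.mul_sum]
    refine Finset.sum_congr rfl fun i _ => ?_
    rw [Pi.smul_apply, smul_eq_mul, he j i (by omega)]
    split_ifs
    · linear_combination x i * h0
    · linear_combination - x i * h0
  intro i
  by_cases hi : (i : ℕ) = 0
  · refine ⟨e i, e ⟨t-1, by omega⟩, D 0 (e i), D 0 (e ⟨t-1, by omega⟩), hD.vertex _ _, hD.vertex _ _, ?_⟩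
    intro x
    rw [key, key, ← Finset.sum_add_distrib, Finset.sum_eq_single i]
    · rw [if_pos le_rfl, if_pos (by simp; omega)]; ring
    · intro b _ hbi
      have : (b : ℕ) ≠ i := fun h => hbi (Fin.ext h)
      rw [if_neg (by omega), if_pos (by simp; omega)]; ring
    · simp
  · refine ⟨e i, e ⟨i-1, by omega⟩, D 0 (e i), - D 0 (e ⟨i-1, by omega⟩), hD.vertex _ _, ?_, ?_⟩
    · rcases hD.vertex 0 (e ⟨i-1, by omega⟩) with h | h <;> rw [h] <;> norm_num
    intro x
    rw [neg_mul, key, key, ← sub_eq_add_neg, ← Finset.sum_sub_distrib, Finset.sum_eq_single i]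
    · rw [if_pos le_rfl, if_neg (by simp; omega)]; ring
    · intro b _ hbi
      have : (b : ℕ) ≠ i := fun h => hbi (Fin.ext h)
      by_cases hlt : (b : ℕ) ≤ i
      · rw [if_pos hlt, if_pos (by simp; omega)]; ring
      · rw [if_neg hlt, if_neg (by simp; omega)]; ring
    · simp

theorem aux_inj (t : ℕ) (D : ℕ → Vec t) (hD : IsSymCycle t D) (ht : 3 ≤ t)
    (x y : Fin t → ℝ) (h : ∑ i : Fin t, x i • D (i : ℕ) = ∑ i : Fin t, y i • D (i : ℕ)) :
    x = y := by
  funext i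
  obtain ⟨a, b, u, v, -, -, hx⟩ := aux_coord t D hD ht i
  have h1 := hx x
  have h2 := hx y
  rw [h] at h1
  linarith

theorem aux_ex (t : ℕ) (D : ℕ → Vec t) (hD : IsSymCycle t D) (ht : 3 ≤ t)
    (T : Vec t) (hT : IsPMVertex T) : ∃ x, IsXVec t D T x := by
  let L : (Fin t → ℝ) →ₗ[ℝ] (Fin t → ℝ) := Fintype.linearCombination ℝ (fun i : Fin t => D (i : ℕ))
  have hL : ∀ x, L x = ∑ i : Fin t, x i • D (i : ℕ) := fun x => Fintype.linearCombination_apply ..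
  have hinj : Function.Injective L := by
    intro x y h
    rw [hL, hL] at h
    exact aux_inj t D hD ht x y h
  obtain ⟨x, hx⟩ := LinearMap.injective_iff_surjective.mp hinj T
  rw [hL] at hx
  refine ⟨x, fun i => ?_, hx.symm⟩
  obtain ⟨a, b, u, v, hu, hv, hxi⟩ := aux_coord t D hD ht i
  have h1 := hxi x
  rw [hx] at h1
  rcases hu with rfl | rfl <;> rcases hv with rfl | rfl <;> rcases hT a with h | h <;>
    rcases hT b with h' | h' <;> rw [h, h'] at h1 <;> norm_num at h1 <;>
    first
    | (right; left; linarith)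
    | (right; right; linarith)
    | (left; linarith)

theorem aux_parity {ι : Type*} (s : Finset ι) (f : ι → ℝ) (hf : ∀ i ∈ s, f i = 1 ∨ f i = -1) :
    ∃ m : ℤ, ∑ i ∈ s, f i = s.card + 2 * (m : ℝ) := by
  classical
  induction s using Finset.induction_on with
  | empty => exact ⟨0, by simp⟩
  | insert a s ha ih =>
    obtain ⟨m, hm⟩ := ih (fun i hi => hf i (Finset.mem_insert_of_mem hi))
    rw [Finset.sum_insert ha, Finset.card_insert_of_notMem ha, hm]
    rcases hf a (Finset.mem_insert_self _ _) with h | h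
    · exact ⟨m, by rw [h]; push_cast; ring⟩
    · exact ⟨m - 1, by rw [h]; push_cast; ring⟩

open Classical in
theorem aux_sub (t : ℕ) (D : ℕ → Vec t) (hD : IsSymCycle t D) (ht : 3 ≤ t)
    (T : Vec t) (x : Fin t → ℝ) (hx : IsXVec t D T x) (Q' : Finset (Vec t))
    (hQ : Q' ⊆ VD t D) (hs : ∑ q ∈ Q', q = T) :
    ((Finset.univ.filter fun i : Fin t => x i ≠ 0).image fun i => x i • D (i : ℕ)) ⊆ Q' := by
  have hsum : ∑ q ∈ Q', q = ∑ i : Fin t, ((if D i ∈ Q' then (1:ℝ) else 0) -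
      (if - D i ∈ Q' then (1:ℝ) else 0)) • D (i : ℕ) := by
    have h1 : ∑ q ∈ Q', q = ∑ q ∈ VD t D, if q ∈ Q' then q else 0 := by
      rw [← Finset.sum_filter]
      congr 1
      ext q
      simp only [Finset.mem_filter]
      exact ⟨fun h => ⟨hQ h, h⟩, fun h => h.2⟩
    rw [h1, VD, Finset.sum_image, two_mul, Finset.sum_range_add, ← Finset.sum_add_distrib,
      Finset.sum_range]
    · refine Finset.sum_congr rfl fun i _ => ?_
      have := hD.symm i (by omega)
      rw [add_comm t, this, sub_smul]
      split_ifs <;> simp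
    · intro a ha b hb h
      simp only [Finset.coe_range, Set.mem_Iio] at ha hb
      exact hD.inj a b ha hb h
  have hxe := aux_inj t D hD ht x _ (hx.2.symm.trans (hs.symm.trans hsum))
  intro q hq
  simp only [Finset.mem_image, Finset.mem_filter, Finset.mem_univ, true_and] at hq
  obtain ⟨i, hi, rfl⟩ := hq
  have hxi := congrFun hxe i
  by_cases h1 : D i ∈ Q' <;> by_cases h2 : - D i ∈ Q' <;> simp only [h1, h2, if_true, if_false] at hxi
  · exact absurd (by rw [hxi]; norm_num) hi
  · rw [hxi]; simpa using h1
  · rw [hxi]; simpa using h2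
  · exact absurd (by rw [hxi]; norm_num) hi

open Classical in
/-- for any symmetric cycle `D` in `H(t,2)` and any vertex `T` of `{1,-1}^t`
there is a unique `x ∈ {-1,0,1}^t` with `T = ∑ i, x i • D^{i-1}`; moreover the set
`Q(T,D) = {x_i • D^{i-1} : x_i ≠ 0}` is the unique inclusion-minimal subset of `V(D)`
summing to `T`, it has odd cardinality, and `∑_{Q ∈ Q(T,D)} ⟨T,Q⟩ = t`. -/
theorem stmt0 (t : ℕ) (ht : 3 ≤ t) (D : ℕ → Vec t) (hD : IsSymCycle t D)
    (T : Vec t) (hT : IsPMVertex T) :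
    (∃! x : Fin t → ℝ, IsXVec t D T x) ∧
    ∀ x : Fin t → ℝ, IsXVec t D T x →
      IsMinDecomp t D T
        ((Finset.univ.filter fun i : Fin t => x i ≠ 0).image fun i => x i • D (i : ℕ)) ∧
      (∀ Q' : Finset (Vec t), IsMinDecomp t D T Q' →
        Q' = (Finset.univ.filter fun i : Fin t => x i ≠ 0).image fun i => x i • D (i : ℕ)) ∧
      Odd ((Finset.univ.filter fun i : Fin t => x i ≠ 0).image
        fun i => x i • D (i : ℕ)).card ∧
      (∑ q ∈ (Finset.univ.filter fun i : Fin t => x i ≠ 0).image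
        fun i => x i • D (i : ℕ), sprod T q) = (t : ℝ) := by
  refine ⟨?_, ?_⟩
  · obtain ⟨x, hx⟩ := aux_ex t D hD ht T hT
    exact ⟨x, hx, fun y hy => aux_inj t D hD ht y x (hy.2.symm.trans hx.2)⟩
  intro x hx
  have hinj : Set.InjOn (fun i : Fin t => x i • D (i : ℕ))
      ((Finset.univ.filter fun i : Fin t => x i ≠ 0) : Finset (Fin t)) := by
    intro i hi j hj h
    have hi : x i ≠ 0 := by simpa using hi
    by_contra hij
    have h2 := aux_inj t D hD ht (Pi.single i (x i)) (Pi.single j (x j)) (by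
      simpa [Pi.single_apply, ite_smul] using h)
    have h3 := congrFun h2 i
    simp [Pi.single_apply, hij] at h3
    exact hi h3
  have hsum : ∑ q ∈ (Finset.univ.filter fun i : Fin t => x i ≠ 0).image
      (fun i => x i • D (i : ℕ)), q = T := by
    rw [Finset.sum_image hinj, hx.2, Finset.sum_filter]
    refine Finset.sum_congr rfl fun i _ => ?_
    by_cases h : x i = 0 <;> simp [h]
  have hsub : (Finset.univ.filter fun i : Fin t => x i ≠ 0).image
      (fun i => x i • D (i : ℕ)) ⊆ VD t D := by
    intro q hq
    simp only [Finset.mem_image, Finset.mem_filter, Finset.mem_univ, true_and] at hq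
    obtain ⟨i, hi, rfl⟩ := hq
    simp only [VD, Finset.mem_image, Finset.mem_range]
    rcases hx.1 i with h | h | h
    · exact ⟨i + t, by omega, by rw [hD.symm i (by omega), h]; simp⟩
    · exact absurd h hi
    · exact ⟨i, by omega, by rw [h]; simp⟩
  have hmin := aux_sub t D hD ht T x hx
  refine ⟨⟨hsub, hsum, fun Q' h1 h2 h3 => h3.2 (hmin Q' h1 h2)⟩, ?_, ?_, ?_⟩
  · intro Q' hQ'
    by_contra hne
    exact hQ'.2.2 _ hsub hsum ((hmin Q' hQ'.1 hQ'.2.1).ssubset_of_ne (Ne.symm hne))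
  · have hc : Fin t := ⟨0, by omega⟩
    obtain ⟨m, hm⟩ := aux_parity ((Finset.univ.filter fun i : Fin t => x i ≠ 0).image
      (fun i => x i • D (i : ℕ))) (fun q => q hc) (by
        intro q hq
        obtain ⟨k, -, rfl⟩ := Finset.mem_image.mp (hsub hq)
        exact hD.vertex k hc)
    rw [← Finset.sum_apply, hsum] at hm
    generalize Finset.card _ = n at hm ⊢
    rcases hT hc with h | h <;> rw [h] at hm
    · have : (1 : ℤ) = n + 2 * m := by exact_mod_cast hm
      rw [Nat.odd_iff]; omega
    · have : (-1 : ℤ) = n + 2 * m := by exact_mod_cast hm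
      rw [Nat.odd_iff]; omega
  · have h1 : ∀ s : Finset (Vec t), ∑ q ∈ s, sprod T q = sprod T (∑ q ∈ s, q) := by
      intro s
      unfold sprod
      rw [Finset.sum_comm]
      simp only [Finset.sum_apply, Finset.mul_sum]
    rw [h1, hsum, sprod]
    have : ∀ i, T i * T i = 1 := by
      intro i
      rcases hT i with h | h <;> rw [h] <;> norm_num
    simp [this]
end
end

section
/- Let D be a symmetric cycle in the hypercube graph H(t,2). The map sending a subset A of [t] to x(T_A,D) is a valuation on the Boolean lattice of subsets of [t]: for any two subsets A,B of [t], x(T_A,D) + x(T_B,D) = x(T_{A intersect B},D) + x(T_{A union B},D). -/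
open Finset

noncomputable section

theorem symCycle_li (t : ℕ) (ht : 3 ≤ t) (D : ℕ → Vec t) (hD : IsSymCycle t D) :
    LinearIndependent ℝ (fun i : Fin t => D (i : ℕ)) := by
  classical
  apply linearIndependent_of_top_le_span_of_card_eq_finrank _ (by simp)
  set W := Submodule.span ℝ (Set.range (fun i : Fin t => D (i : ℕ))) with hW
  have hmem : ∀ k, k < t → D k ∈ W := fun k hk => Submodule.subset_span ⟨⟨k, hk⟩, rfl⟩
  have hDt : D t = -(D 0) := by
    have := hD.symm 0 (Nat.zero_le _)
    rwa [Nat.zero_add] at this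
  have hmem' : ∀ k, k ≤ t → D k ∈ W := by
    intro k hk
    rcases hk.lt_or_eq with h | h
    · exact hmem k h
    · rw [h, hDt]
      exact W.neg_mem (hmem 0 (by omega))
  have hne : ∀ k i, D k i ≠ 0 := by
    intro k i h
    rcases hD.vertex k i with h1 | h1 <;> rw [h] at h1 <;> norm_num at h1
  have key : ∀ i : Fin t, Pi.single i (1 : ℝ) ∈ W := by
    intro i
    have hex : ∃ k, k < t ∧ D k i ≠ D (k + 1) i := by
      by_contra hcon
      push Not at hcon
      have hall : ∀ k, k ≤ t → D k i = D 0 i := by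
        intro k
        induction k with
        | zero => intro _; rfl
        | succ n ih =>
          intro hn
          rw [← hcon n (by omega)]
          exact ih (by omega)
      have h1 := hall t le_rfl
      rw [hDt] at h1
      have h2 := hne 0 i
      apply h2
      simp only [Pi.neg_apply] at h1
      linarith
    obtain ⟨k, hk, hki⟩ := hex
    have hc := hD.adj k
    unfold hamming at hc
    obtain ⟨j, hj⟩ := Finset.card_eq_one.mp hc
    have hij : ∀ l, D k l ≠ D (k + 1) l → l = j := by
      intro l hl
      have : l ∈ ({j} : Finset (Fin t)) := by
        rw [← hj]; simpa using hl
      simpa using this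
    have hsub : D k - D (k + 1) ∈ W := W.sub_mem (hmem' k hk.le) (hmem' (k + 1) hk)
    have heq : Pi.single i (1 : ℝ) = (D k i - D (k + 1) i)⁻¹ • (D k - D (k + 1)) := by
      funext l
      by_cases hl : l = i
      · subst hl
        simp [inv_mul_cancel₀ (sub_ne_zero.mpr hki)]
      · have : D k l = D (k + 1) l := by
          by_contra h
          exact hl ((hij l h).trans (hij i hki).symm)
        simp [hl, this]
    rw [heq]
    exact W.smul_mem _ hsub
  intro v _
  rw [← Finset.univ_sum_single v]
  apply W.sum_mem
  intro i _
  have : Pi.single i (v i) = v i • (Pi.single i (1 : ℝ) : Vec t) := by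
    rw [← Pi.single_smul]; simp
  rw [this]
  exact W.smul_mem _ (key i)

/-- `A ↦ x(T_A, D)` is a valuation on the Boolean lattice:
`x(T_A,D) + x(T_B,D) = x(T_{A∩B},D) + x(T_{A∪B},D)`. -/
theorem stmt1 (t : ℕ) (ht : 3 ≤ t) (D : ℕ → Vec t) (hD : IsSymCycle t D)
    (A B : Finset (Fin t)) (xA xB xI xU : Fin t → ℝ)
    (hA : IsXVec t D (topeOf t A) xA) (hB : IsXVec t D (topeOf t B) xB)
    (hI : IsXVec t D (topeOf t (A ∩ B)) xI) (hU : IsXVec t D (topeOf t (A ∪ B)) xU) :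
    xA + xB = xI + xU := by
  have hli := symCycle_li t ht D hD
  have hT : topeOf t A + topeOf t B = topeOf t (A ∩ B) + topeOf t (A ∪ B) := by
    funext i
    by_cases h1 : i ∈ A <;> by_cases h2 : i ∈ B <;> simp [topeOf, h1, h2]
  rw [hA.2, hB.2, hI.2, hU.2, ← Finset.sum_add_distrib, ← Finset.sum_add_distrib] at hT
  simp only [← add_smul] at hT
  have h0 : ∑ i : Fin t, ((xA i + xB i) - (xI i + xU i)) • D (i : ℕ) = 0 := by
    simp only [sub_smul, Finset.sum_sub_distrib]
    rw [hT, sub_self]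
  funext i
  have := Fintype.linearIndependent_iff.mp hli _ h0 i
  simp only [Pi.add_apply]
  linarith
end
end

section
/- Let D be a symmetric cycle in the hypercube graph H(t,2), let alpha >= 1, and let A_1,...,A_alpha be subsets of [t]. Then x(T_{A_1 union ... union A_alpha},D) = - sum over all nonempty subsets S of [alpha] of (-1)^{|S|} * x(T_{intersection of A_s over s in S},D). -/
open Finset

noncomputable section

theorem flip_exists {t : ℕ} (ht : 3 ≤ t) (D : ℕ → Vec t) (hD : IsSymCycle t D) (j : Fin t) :
    ∃ k, k < t ∧ D k j ≠ D (k + 1) j := by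
  by_contra! h
  have h1 : ∀ k, k ≤ t → D k j = D 0 j := by
    intro k
    induction k with
    | zero => intro _; rfl
    | succ n ih =>
      intro hn
      rw [← h n (by omega)]
      exact ih (by omega)
  have h2 := h1 t le_rfl
  have h3 := congrFun (hD.symm 0 (by omega)) j
  rw [Nat.zero_add, h2, Pi.neg_apply] at h3
  rcases hD.vertex 0 j with h4 | h4 <;> rw [h4] at h3 <;> norm_num at h3

theorem symcycle_linInd {t : ℕ} (ht : 3 ≤ t) (D : ℕ → Vec t) (hD : IsSymCycle t D) :
    LinearIndependent ℝ (fun i : Fin t => D (i : ℕ)) := by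
  classical
  apply linearIndependent_of_top_le_span_of_card_eq_finrank
  · have hm : ∀ k, k ≤ t → D k ∈ Submodule.span ℝ (Set.range (fun i : Fin t => D (i : ℕ))) := by
      intro k hk
      rcases hk.lt_or_eq with hk | hk
      · exact Submodule.subset_span ⟨⟨k, hk⟩, rfl⟩
      · subst hk
        have h3 := hD.symm 0 (by omega)
        rw [Nat.zero_add] at h3
        rw [h3]
        exact Submodule.neg_mem _ (Submodule.subset_span ⟨⟨0, by omega⟩, rfl⟩)
    rw [← (Pi.basisFun ℝ (Fin t)).span_eq, Submodule.span_le]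
    rintro _ ⟨j, rfl⟩
    obtain ⟨k, hk, hj⟩ := flip_exists ht D hD j
    have ha := hD.adj k
    unfold hamming at ha
    rw [Finset.card_eq_one] at ha
    obtain ⟨j', hj'⟩ := ha
    have hmem : ∀ i, D k i ≠ D (k + 1) i ↔ i = j' := by
      intro i
      have := Finset.ext_iff.mp hj' i
      simpa using this
    have hjj : j = j' := (hmem j).1 hj
    subst hjj
    have hne : D k j - D (k + 1) j ≠ 0 := sub_ne_zero.mpr hj
    have he : Pi.basisFun ℝ (Fin t) j = (D k j - D (k + 1) j)⁻¹ • (D k - D (k + 1)) := by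
      ext i
      by_cases hi : i = j
      · subst hi
        simp [hne]
      · have : D k i = D (k + 1) i := by
          by_contra h
          exact hi ((hmem i).1 h)
        simp [this, hi]
    rw [he]
    exact Submodule.smul_mem _ _ (Submodule.sub_mem _ (hm k hk.le) (hm (k + 1) hk))
  · simp

theorem sum_nonempty_sign {α : Type*} [DecidableEq α] (B : Finset α) :
    ∑ S ∈ B.powerset.filter (fun S : Finset α => S.Nonempty), (-1 : ℝ) ^ S.card
      = if B.Nonempty then -1 else 0 := by
  have h := Finset.sum_powerset_neg_one_pow_card (x := B)
  have h' : ∑ S ∈ B.powerset, (-1 : ℝ) ^ S.card = if B = ∅ then 1 else 0 := by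
    exact_mod_cast h
  have h2 : B.powerset.filter (fun S : Finset α => S.Nonempty) = B.powerset.erase ∅ := by
    ext S
    simp [Finset.nonempty_iff_ne_empty, and_comm]
  rw [h2, ← Finset.add_sum_erase _ _ (Finset.empty_mem_powerset B)] at *
  by_cases hB : B = ∅
  · simp_all
  · simp only [hB, Finset.nonempty_iff_ne_empty.mpr hB, if_true, if_false, Finset.card_empty, pow_zero] at h' ⊢
    linarith

theorem tope_incl_excl (t a : ℕ) (ha : 1 ≤ a) (A : Fin a → Finset (Fin t)) :
    topeOf t (Finset.univ.biUnion A) =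
      -∑ S ∈ Finset.univ.powerset.filter (fun S : Finset (Fin a) => S.Nonempty),
        ((-1 : ℝ) ^ S.card) • topeOf t (S.inf A) := by
  ext i
  set B : Finset (Fin a) := Finset.univ.filter (fun s => i ∈ A s) with hB
  have hS : ∀ S : Finset (Fin a), topeOf t (S.inf A) i = 1 - 2 * (if S ⊆ B then 1 else 0) := by
    intro S
    have : i ∈ S.inf A ↔ S ⊆ B := by
      rw [Finset.mem_inf]
      simp [hB, Finset.subset_iff]
    unfold topeOf
    simp only [this]
    split_ifs <;> norm_num
  have hU : topeOf t (Finset.univ.biUnion A) i = 1 - 2 * (if B.Nonempty then 1 else 0) := by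
    have : i ∈ Finset.univ.biUnion A ↔ B.Nonempty := by
      simp [hB, Finset.Nonempty]
    unfold topeOf
    simp only [this]
    split_ifs <;> norm_num
  rw [hU]
  simp only [Pi.neg_apply, Finset.sum_apply, Pi.smul_apply, smul_eq_mul, hS, mul_sub, mul_one,
    Finset.sum_sub_distrib]
  have h1 := sum_nonempty_sign (Finset.univ : Finset (Fin a))
  have hne : (Finset.univ : Finset (Fin a)).Nonempty := ⟨⟨0, ha⟩, Finset.mem_univ _⟩
  rw [if_pos hne] at h1
  have h2 := sum_nonempty_sign B
  have h3 : ∑ S ∈ Finset.univ.powerset.filter (fun S : Finset (Fin a) => S.Nonempty),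
      (-1 : ℝ) ^ S.card * (2 * (if S ⊆ B then 1 else 0))
      = 2 * ∑ S ∈ B.powerset.filter (fun S : Finset (Fin a) => S.Nonempty), (-1 : ℝ) ^ S.card := by
    have : B.powerset.filter (fun S : Finset (Fin a) => S.Nonempty) =
      (Finset.univ.powerset.filter (fun S : Finset (Fin a) => S.Nonempty)).filter (· ⊆ B) := by
      ext S
      simp [and_comm]
    rw [this, Finset.sum_filter (p := (· ⊆ B)), Finset.mul_sum]
    refine Finset.sum_congr rfl fun S _ => ?_
    split_ifs <;> ring
  rw [h1, h3, h2]
  split_ifs <;> norm_num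

/-- Inclusion–Exclusion for the `x`-vectors:
`x(T_{A_1 ∪ … ∪ A_a}, D) = -∑_{∅ ≠ S ⊆ [a]} (-1)^{|S|} x(T_{⋂_{s ∈ S} A_s}, D)`. -/
theorem stmt3 (t : ℕ) (ht : 3 ≤ t) (D : ℕ → Vec t) (hD : IsSymCycle t D)
    (a : ℕ) (ha : 1 ≤ a) (A : Fin a → Finset (Fin t))
    (xU : Fin t → ℝ) (hU : IsXVec t D (topeOf t (Finset.univ.biUnion A)) xU)
    (xf : Finset (Fin a) → Fin t → ℝ)
    (hxf : ∀ S : Finset (Fin a), S.Nonempty → IsXVec t D (topeOf t (S.inf A)) (xf S)) :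
    xU = -∑ S ∈ Finset.univ.powerset.filter (fun S : Finset (Fin a) => S.Nonempty),
      ((-1 : ℝ) ^ S.card) • xf S := by
  have hli := symcycle_linInd ht D hD
  have hT := tope_incl_excl t a ha A
  have hinj : Function.Injective
      (Fintype.linearCombination ℝ (fun i : Fin t => D (i : ℕ))) :=
    hli.fintypeLinearCombination_injective
  apply hinj
  rw [map_neg, map_sum]
  simp only [map_smul]
  have hx : ∀ T x, IsXVec t D T x →
      Fintype.linearCombination ℝ (fun i : Fin t => D (i : ℕ)) x = T := by
    intro T x h
    rw [Fintype.linearCombination_apply, h.2]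
  rw [hx _ _ hU, hT]
  congr 1
  refine Finset.sum_congr rfl fun S hS => ?_
  rw [hx _ _ (hxf S (Finset.mem_filter.mp hS).2)]
end
end

section
/- Let D be a symmetric cycle in the hypercube graph H(t,2) and let T be any vertex of {1,-1}^t. Then sum_{Q in Q(T,D)} |Q^-| = |T^-| + (1/2)(q(T)-1)*t; equivalently, q(T) = 1 - (2/t)|T^-| + (2/t) * sum_{Q in Q(T,D)} |Q^-|. -/
open Finset

noncomputable section

theorem sum_eq_sub_negCard {t : ℕ} (T : Vec t) (hT : IsPMVertex T) :
    (∑ i, T i) = (t : ℝ) - 2 * (negCard T : ℝ) := by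
  classical
  have h : ∀ i, T i = 1 - 2 * (if T i = -1 then (1 : ℝ) else 0) := by
    intro i
    rcases hT i with h | h <;> rw [h] <;> norm_num
  have h2 : (negCard T : ℝ) = ∑ i, (if T i = -1 then (1 : ℝ) else 0) := by
    unfold negCard
    rw [Finset.sum_boole]
  rw [h2, Finset.mul_sum, Finset.sum_congr rfl (fun i _ => h i), Finset.sum_sub_distrib]
  simp

/-- `∑_{Q ∈ Q(T,D)} |Q⁻| = |T⁻| + (1/2)(q(T)-1)t`, equivalently
`q(T) = 1 - (2/t)|T⁻| + (2/t) ∑_{Q ∈ Q(T,D)} |Q⁻|`. -/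
theorem stmt4 (t : ℕ) (ht : 3 ≤ t) (D : ℕ → Vec t) (hD : IsSymCycle t D)
    (T : Vec t) (hT : IsPMVertex T)
    (Q : Finset (Vec t)) (hQ : IsMinDecomp t D T Q) :
    (∑ q ∈ Q, (negCard q : ℝ)) = (negCard T : ℝ) + (1 / 2) * ((Q.card : ℝ) - 1) * t ∧
    (Q.card : ℝ) = 1 - (2 / (t : ℝ)) * (negCard T : ℝ) +
      (2 / (t : ℝ)) * ∑ q ∈ Q, (negCard q : ℝ) := by
  obtain ⟨hsub, hsum, -⟩ := hQ
  have hpm : ∀ q ∈ Q, IsPMVertex q := by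
    intro q hq
    have h := hsub hq
    unfold VD at h
    rw [Finset.mem_image] at h
    obtain ⟨k, -, rfl⟩ := h
    exact hD.vertex k
  have h1 : (∑ i, T i) = ∑ q ∈ Q, ∑ i, q i := by
    rw [Finset.sum_comm, ← hsum]
    simp [Finset.sum_apply]
  rw [sum_eq_sub_negCard T hT,
    Finset.sum_congr rfl (fun q hq => sum_eq_sub_negCard q (hpm q hq)),
    Finset.sum_sub_distrib, ← Finset.mul_sum, Finset.sum_const, nsmul_eq_mul] at h1
  have ht0 : (t : ℝ) ≠ 0 := by
    have : t ≠ 0 := by omega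
    exact_mod_cast this
  constructor
  · linarith
  · field_simp
    linarith
end
end

section
/- Let D be a symmetric cycle in the hypercube graph H(t,2) and let T be any vertex of {1,-1}^t. Then sum_{Q in Q(T,D)} d(T,Q) = -|T^-| + sum_{Q in Q(T,D)} |Q^-|, where d denotes Hamming distance. -/
open Finset

noncomputable section

open Classical in
theorem hamming_aux {t : ℕ} {X Y : Vec t} (hX : IsPMVertex X) (hY : IsPMVertex Y) :
    (hamming X Y : ℝ) = ∑ i, (1 - X i * Y i) / 2 := by
  unfold hamming
  rw [Finset.card_filter]
  push_cast
  refine Finset.sum_congr rfl fun i _ => ?_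
  rcases hX i with h | h <;> rcases hY i with h' | h' <;> rw [h, h'] <;> norm_num

open Classical in
theorem negCard_aux {t : ℕ} {X : Vec t} (hX : IsPMVertex X) :
    (negCard X : ℝ) = ∑ i, (1 - X i) / 2 := by
  unfold negCard
  rw [Finset.card_filter]
  push_cast
  refine Finset.sum_congr rfl fun i _ => ?_
  rcases hX i with h | h <;> rw [h] <;> norm_num

/-- `∑_{Q ∈ Q(T,D)} d(T,Q) = -|T⁻| + ∑_{Q ∈ Q(T,D)} |Q⁻|`. -/
theorem stmt5 (t : ℕ) (ht : 3 ≤ t) (D : ℕ → Vec t) (hD : IsSymCycle t D)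
    (T : Vec t) (hT : IsPMVertex T)
    (Q : Finset (Vec t)) (hQ : IsMinDecomp t D T Q) :
    (∑ q ∈ Q, (hamming T q : ℤ)) = -(negCard T : ℤ) + ∑ q ∈ Q, (negCard q : ℤ) := by
  obtain ⟨hsub, hsum, -⟩ := hQ
  have hV : ∀ q ∈ Q, IsPMVertex q := by
    intro q hq
    have := hsub hq
    unfold VD at this
    obtain ⟨k, -, rfl⟩ := Finset.mem_image.1 this
    exact hD.vertex k
  have hR : (∑ q ∈ Q, (hamming T q : ℝ)) = -(negCard T : ℝ) + ∑ q ∈ Q, (negCard q : ℝ) := by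
    rw [Finset.sum_congr rfl fun q hq => hamming_aux hT (hV q hq),
      Finset.sum_congr rfl fun q hq => negCard_aux (hV q hq), negCard_aux hT,
      Finset.sum_comm, Finset.sum_comm (s := Q), ← Finset.sum_neg_distrib,
      ← Finset.sum_add_distrib]
    refine Finset.sum_congr rfl fun i _ => ?_
    have hi : ∑ q ∈ Q, q i = T i := by rw [← hsum, Finset.sum_apply]
    rw [← Finset.sum_div, ← Finset.sum_div, Finset.sum_sub_distrib, Finset.sum_sub_distrib,
      ← Finset.mul_sum, hi]
    rcases hT i with h | h <;> rw [h] <;> ring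
  exact_mod_cast hR
end
end

section
/- Let D be a symmetric cycle in the hypercube graph H(t,2) and let T' and T'' be any two vertices of {1,-1}^t. Then -d(T',T'') + sum over all pairs (Q',Q'') with Q' in Q(T',D) and Q'' in Q(T'',D) of d(Q',Q'') = (1/2)(q(T')*q(T'') - 1)*t. -/
open Finset

noncomputable section

theorem hamming_pm {t : ℕ} (X Y : Vec t) (hX : IsPMVertex X) (hY : IsPMVertex Y) :
    (hamming X Y : ℝ) = (1 / 2) * ((t : ℝ) - ∑ i, X i * Y i) := by
  classical
  have h1 : (hamming X Y : ℝ) = ∑ i, (if X i ≠ Y i then (1 : ℝ) else 0) := by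
    unfold hamming
    rw [Finset.sum_boole]
  have h2 : (t : ℝ) = ∑ _i : Fin t, (1 : ℝ) := by simp
  rw [h1, h2, ← Finset.sum_sub_distrib, Finset.mul_sum]
  refine Finset.sum_congr rfl fun i _ => ?_
  rcases hX i with h | h <;> rcases hY i with h' | h' <;> rw [h, h'] <;> norm_num

/-- `-d(T',T'') + ∑_{Q' ∈ Q(T',D), Q'' ∈ Q(T'',D)} d(Q',Q'')
  = (1/2)(q(T') q(T'') - 1) t`. -/
theorem stmt8 (t : ℕ) (ht : 3 ≤ t) (D : ℕ → Vec t) (hD : IsSymCycle t D)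
    (T₁ T₂ : Vec t) (hT₁ : IsPMVertex T₁) (hT₂ : IsPMVertex T₂)
    (Q₁ Q₂ : Finset (Vec t)) (hQ₁ : IsMinDecomp t D T₁ Q₁) (hQ₂ : IsMinDecomp t D T₂ Q₂) :
    -(hamming T₁ T₂ : ℝ) + ∑ q₁ ∈ Q₁, ∑ q₂ ∈ Q₂, (hamming q₁ q₂ : ℝ) =
      (1 / 2) * ((Q₁.card : ℝ) * (Q₂.card : ℝ) - 1) * t := by
  have hv : ∀ q ∈ VD t D, IsPMVertex q := by
    intro q hq
    unfold VD at hq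
    obtain ⟨k, _, rfl⟩ := Finset.mem_image.mp hq
    exact hD.vertex k
  obtain ⟨s1, e1, _⟩ := hQ₁
  obtain ⟨s2, e2, _⟩ := hQ₂
  have hs : ∑ q₁ ∈ Q₁, ∑ q₂ ∈ Q₂, (hamming q₁ q₂ : ℝ)
      = ∑ q₁ ∈ Q₁, ∑ q₂ ∈ Q₂, (1 / 2) * ((t : ℝ) - ∑ i, q₁ i * q₂ i) :=
    Finset.sum_congr rfl fun a ha => Finset.sum_congr rfl fun b hb =>
      hamming_pm a b (hv a (s1 ha)) (hv b (s2 hb))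
  have hp : ∑ q₁ ∈ Q₁, ∑ q₂ ∈ Q₂, ∑ i, q₁ i * q₂ i = ∑ i, T₁ i * T₂ i := by
    rw [← e1, ← e2]
    simp only [Finset.sum_apply, Finset.sum_mul_sum]
    rw [Finset.sum_comm]
    simp_rw [Finset.sum_comm (s := Q₁) (t := Finset.univ)]
    rw [Finset.sum_comm]
    refine Finset.sum_congr rfl fun i _ => ?_
    rw [Finset.sum_comm]
  rw [hs, hamming_pm T₁ T₂ hT₁ hT₂]
  simp only [← Finset.mul_sum, Finset.sum_sub_distrib, hp, Finset.sum_const, nsmul_eq_mul]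
  ring
end
end

section
/- Let j', j'' be integers and ellcap, ell', ell'' odd integers in [t]. Consider the family F of ordered pairs (A,B) of subsets of [t] with |A| = j', |B| = j'', |A intersect B| > 0, max{j',j''} < |A union B| = t, q(A intersect B) = ellcap, q(A - B) = ell' and q(B - A) = ell''. Then: (i) the number of pairs (A,B) in F with {1,t} intersect A = {1} and {1,t} intersect B = {1,t} is Tm(theta,beta;(ellcap+1)/2,(ell'-1)/2,(ell''+1)/2) * c((ellcap+1)/2; j'+j''-t) * c((ell'-1)/2; t-j'') * c((ell''+1)/2; t-j'); (ii) the number with {1,t} intersect A = {1} and {1,t} intersect B = {t} is Tm(alpha,beta;(ellcap-1)/2,(ell'+1)/2,(ell''+1)/2) * c((ellcap-1)/2; j'+j''-t) * c((ell'+1)/2; t-j'') * c((ell''+1)/2; t-j'); (iii) the number with {1,t} intersect A = {1,t} intersect B = {1,t} is Tm(theta,theta;(ellcap+1)/2,(ell'-1)/2,(ell''-1)/2) * c((ellcap+1)/2; j'+j''-t) * c((ell'-1)/2; t-j'') * c((ell''-1)/2; t-j'); (iv) the number with {1,t} intersect A = {1,t} and {1,t} intersect B empty is Tm(alpha,alpha;(ellcap-1)/2,(ell'+1)/2,(ell''-1)/2)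 * c((ellcap-1)/2; j'+j''-t) * c((ell'+1)/2; t-j'') * c((ell''-1)/2; t-j'); (v) the number with {1,t} intersect A = {1,t} and {1,t} intersect B = {t} is Tm(alpha,theta;(ellcap+1)/2,(ell'+1)/2,(ell''-1)/2) * c((ellcap+1)/2; j'+j''-t) * c((ell'+1)/2; t-j'') * c((ell''-1)/2; t-j'). -/
open Finset

noncomputable section

/-! ### Run compression -/

def rle : List (Fin 3) → List (Fin 3)
  | [] => []
  | [a] => [a]
  | a :: b :: l => if a = b then rle (b :: l) else a :: rle (b :: l)

lemma rle_cons_eq (a : Fin 3) (l : List (Fin 3)) : ∃ r, rle (a :: l) = a :: r := by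
  induction l generalizing a with
  | nil => exact ⟨[], rfl⟩
  | cons b l ih =>
    by_cases h : a = b
    · subst h
      obtain ⟨r, hr⟩ := ih a
      exact ⟨r, by simp [rle, hr]⟩
    · exact ⟨rle (b :: l), by simp [rle, h]⟩

lemma rle_eq_nil (w : List (Fin 3)) : rle w = [] ↔ w = [] := by
  cases w with
  | nil => simp [rle]
  | cons a l =>
    obtain ⟨r, hr⟩ := rle_cons_eq a l
    simp [hr]

lemma rle_head? (w : List (Fin 3)) : (rle w).head? = w.head? := by
  cases w with
  | nil => simp [rle]
  | cons a l =>
    obtain ⟨r, hr⟩ := rle_cons_eq a l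
    simp [hr]

lemma rle_getLast? (w : List (Fin 3)) : (rle w).getLast? = w.getLast? := by
  induction w with
  | nil => simp [rle]
  | cons a l ih =>
    cases l with
    | nil => simp [rle]
    | cons b l =>
      by_cases h : a = b
      · simp only [rle, h, if_true, ih]
        simp [List.getLast?_cons_cons]
      · obtain ⟨r, hr⟩ := rle_cons_eq b l
        simp only [rle, h, if_false]
        rw [hr] at ih ⊢
        rw [List.getLast?_cons_cons, List.getLast?_cons_cons, ih]

lemma rle_chain (w : List (Fin 3)) : List.IsChain (· ≠ ·) (rle w) := by
  induction w with
  | nil => simp [rle]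
  | cons a l ih =>
    cases l with
    | nil => simp [rle]
    | cons b l =>
      by_cases h : a = b
      · simpa only [rle, h, if_true] using ih
      · obtain ⟨r, hr⟩ := rle_cons_eq b l
        simp only [rle, h, if_false]
        rw [hr] at ih ⊢
        exact List.IsChain.cons_cons h ih

lemma rle_cons_iff (a : Fin 3) (v u : List (Fin 3)) (hc : List.IsChain (· ≠ ·) (a :: u)) :
    rle (a :: v) = a :: u ↔ (rle v = a :: u ∨ rle v = u) := by
  cases v with
  | nil => 
    simp [rle]
  | cons b l =>
    obtain ⟨r, hr⟩ := rle_cons_eq b l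
    by_cases h : a = b
    · subst h
      simp only [rle, if_true, hr]
      constructor
      · exact Or.inl
      · rintro (h | h)
        · exact h
        · subst h
          simp at hc
    · simp only [rle, h, if_false, hr]
      constructor
      · intro h; right; simpa using h
      · rintro (h' | h')
        · simp only [List.cons.injEq] at h'
          exact absurd h'.1.symm h
        · rw [h']

/-- number of compositions -/
def cc : ℕ → ℕ → ℕ
  | 0, 0 => 1
  | 0, _ + 1 => 0
  | _ + 1, 0 => 0
  | m + 1, n + 1 => n.choose m

lemma cc_rec (m n : ℕ) : cc (m + 1) (n + 1) = cc (m + 1) n + cc m n := by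
  rcases n with _ | n <;> rcases m with _ | m <;> simp [cc, Nat.choose_succ_succ]
  omega

def Fib (u : List (Fin 3)) (n : Fin 3 → ℕ) : Set (List (Fin 3)) :=
  { w | rle w = u ∧ ∀ a, w.count a = n a }

lemma fib_encard (N : ℕ) : ∀ (u : List (Fin 3)) (n : Fin 3 → ℕ), ∑ a, n a = N →
    List.IsChain (· ≠ ·) u →
    (Fib u n).encard = ((∏ a, cc (u.count a) (n a) : ℕ) : ℕ∞) := by
  induction N with
  | zero =>
    intro u n hn hu
    have hn' : ∀ a, n a = 0 := by simpa using hn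
    cases u with
    | nil =>
      have : Fib [] n = {[]} := by
        ext w
        simp only [Fib, Set.mem_setOf_eq, rle_eq_nil, Set.mem_singleton_iff]
        constructor
        · exact fun h => h.1
        · rintro rfl; simp [hn']
      simp [this, hn', cc]
    | cons a u =>
      have : Fib (a :: u) n = ∅ := by
        ext w
        simp only [Fib, Set.mem_setOf_eq, Set.mem_empty_iff_false, iff_false, not_and]
        intro h1 h2
        cases w with
        | nil => simp [rle] at h1
        | cons b l =>
          have := h2 b
          simp [hn'] at this
      rw [this, Set.encard_empty, Finset.prod_eq_zero (Finset.mem_univ a)]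
      · rfl
      · simp [hn', cc]
  | succ N ih =>
    intro u n hn hu
    cases u with
    | nil =>
      have : Fib [] n = ∅ := by
        ext w
        simp only [Fib, Set.mem_setOf_eq, rle_eq_nil, Set.mem_empty_iff_false, iff_false, not_and]
        rintro rfl h
        simp at h
        simp [← h] at hn
      obtain ⟨a, -, ha⟩ : ∃ a ∈ Finset.univ, n a ≠ 0 := by
        apply Finset.exists_ne_zero_of_sum_ne_zero
        omega
      rw [this, Set.encard_empty, Finset.prod_eq_zero (Finset.mem_univ a)]
      · rfl
      · obtain ⟨k, hk⟩ := Nat.exists_eq_succ_of_ne_zero ha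
        simp [hk, cc]
    | cons a u =>
      rcases Nat.eq_zero_or_pos (n a) with h0 | hpos
      · have : Fib (a :: u) n = ∅ := by
          ext w
          simp only [Fib, Set.mem_setOf_eq, Set.mem_empty_iff_false, iff_false, not_and]
          intro h1 h2
          cases w with
          | nil => simp [rle] at h1
          | cons b l =>
            obtain ⟨r, hr⟩ := rle_cons_eq b l
            rw [hr] at h1
            have hb : b = a := by simpa using (List.cons.inj h1).1
            have := h2 a
            simp [hb, h0] at this
        rw [this, Set.encard_empty, Finset.prod_eq_zero (Finset.mem_univ a)]
        · rfl
        · simp [h0, cc]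
      · set n' : Fin 3 → ℕ := fun b => if b = a then n b - 1 else n b with hn'
        have hnn : ∀ b, n b = n' b + if b = a then 1 else 0 := by
          intro b
          by_cases hb : b = a
          · subst hb; simp [hn']; omega
          · simp [hn', hb]
        have hsum : ∑ b, n' b = N := by
          have : ∑ b, n b = ∑ b, n' b + 1 := by
            rw [Finset.sum_congr rfl (fun b _ => hnn b), Finset.sum_add_distrib]
            simp
          omega
        have hset : Fib (a :: u) n = (List.cons a) '' (Fib (a :: u) n' ∪ Fib u n') := by
          ext w
          simp only [Fib, Set.mem_setOf_eq, Set.mem_image, Set.mem_union]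
          constructor
          · rintro ⟨h1, h2⟩
            cases w with
            | nil => simp [rle] at h1
            | cons b l =>
              obtain ⟨r, hr⟩ := rle_cons_eq b l
              have hb : b = a := by rw [hr] at h1; exact (List.cons.inj h1).1
              subst hb
              refine ⟨l, ?_, rfl⟩
              have hcnt : ∀ c, l.count c = n' c := by
                intro c
                have := h2 c
                rw [hnn c, List.count_cons] at this
                by_cases hc : c = b
                · subst hc; simpa using this
                · have hc' : ¬ b = c := fun h => hc h.symm
                  simpa [hc, hc'] using this
              rcases (rle_cons_iff b l u hu).1 h1 with h | h
              · exact Or.inl ⟨h, hcnt⟩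
              · exact Or.inr ⟨h, hcnt⟩
          · rintro ⟨l, hl, rfl⟩
            have h1 : rle l = a :: u ∨ rle l = u := hl.imp And.left And.left
            have h2 : ∀ c, l.count c = n' c := by
              rcases hl with h | h <;> exact h.2
            refine ⟨(rle_cons_iff a l u hu).2 h1, ?_⟩
            intro c
            rw [hnn c, List.count_cons, h2 c]
            by_cases hc : c = a
            · subst hc; simp
            · have hc' : ¬ a = c := fun h => hc h.symm
              simp [hc, hc']
        have hdisj : Disjoint (Fib (a :: u) n') (Fib u n') := by
          rw [Set.disjoint_left]
          rintro w ⟨h1, -⟩ ⟨h2, -⟩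
          rw [h1] at h2
          have := congrArg List.length h2
          simp at this
        have hinj : Function.Injective (List.cons a) := fun x y h => (List.cons.inj h).2
        rw [hset, hinj.encard_image, Set.encard_union_eq hdisj,
          ih _ _ hsum hu, ih u n' hsum hu.tail, ← Nat.cast_add]
        congr 1
        have hrest : ∀ x ∈ Finset.univ.erase a, cc ((a :: u).count x) (n x) =
            cc (u.count x) (n' x) := by
          intro x hx
          have hx' : x ≠ a := Finset.ne_of_mem_erase hx
          rw [hnn x]
          simp [hx', List.count_cons, Ne.symm hx']
        have hrest' : ∀ x ∈ Finset.univ.erase a, cc ((a :: u).count x) (n' x) =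
            cc (u.count x) (n' x) := by
          intro x hx
          have hx' : x ≠ a := Finset.ne_of_mem_erase hx
          simp [List.count_cons, Ne.symm hx']
        rw [← Finset.mul_prod_erase Finset.univ _ (Finset.mem_univ a),
          ← Finset.mul_prod_erase Finset.univ (fun x => cc (u.count x) (n' x)) (Finset.mem_univ a),
          ← Finset.mul_prod_erase Finset.univ (fun x => cc ((a :: u).count x) (n x)) (Finset.mem_univ a),
          Finset.prod_congr rfl hrest, Finset.prod_congr rfl hrest', ← Nat.add_mul]
        congr 1
        rw [hnn a]
        simp [cc_rec]

def Smir (s' s'' : Fin 3) (m : Fin 3 → ℕ) : Set (List (Fin 3)) :=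
  { w | List.Chain' (· ≠ ·) w ∧
    w.count 0 = m 0 ∧ w.count 1 = m 1 ∧ w.count 2 = m 2 ∧
    w.head? = some s' ∧ w.getLast? = some s'' }

def Wds (s' s'' : Fin 3) (m n : Fin 3 → ℕ) : Set (List (Fin 3)) :=
  { w | (∀ a, w.count a = n a) ∧ (∀ a, (rle w).count a = m a) ∧
    w.head? = some s' ∧ w.getLast? = some s'' }

lemma length_eq_counts (w : List (Fin 3)) : w.length = w.count 0 + w.count 1 + w.count 2 := by
  induction w with
  | nil => simp
  | cons a l ih =>
    simp only [List.length_cons, List.count_cons, ih]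
    fin_cases a <;> simp <;> omega

lemma finite_of_length (S : Set (List (Fin 3))) (N : ℕ) (h : ∀ w ∈ S, w.length = N) :
    S.Finite :=
  (List.finite_length_eq (Fin 3) N).subset h

lemma wds_ncard (s' s'' : Fin 3) (m n : Fin 3 → ℕ) :
    (Wds s' s'' m n).ncard = Tm s' s'' (m 0) (m 1) (m 2) * ∏ a, cc (m a) (n a) := by
  classical
  have hS : (Smir s' s'' m).Finite := finite_of_length _ (m 0 + m 1 + m 2) (by
    rintro w ⟨-, h0, h1, h2, -⟩
    rw [length_eq_counts, h0, h1, h2])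
  have hW : (Wds s' s'' m n).Finite := finite_of_length _ (n 0 + n 1 + n 2) (by
    rintro w ⟨h, -⟩
    rw [length_eq_counts, h, h, h])
  have hT : Tm s' s'' (m 0) (m 1) (m 2) = hS.toFinset.card := by
    rw [← Set.ncard_eq_toFinset_card _ hS]; rfl
  rw [hT, Set.ncard_eq_toFinset_card _ hW]
  have hmaps : ∀ w ∈ hW.toFinset, rle w ∈ hS.toFinset := by
    intro w hw
    rw [Set.Finite.mem_toFinset] at hw ⊢
    obtain ⟨-, h2, h3, h4⟩ := hw
    exact ⟨rle_chain w, h2 0, h2 1, h2 2, by rw [rle_head?, h3], by rw [rle_getLast?, h4]⟩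
  rw [Finset.card_eq_sum_card_fiberwise hmaps, Finset.sum_const_nat]
  intro u hu
  rw [Set.Finite.mem_toFinset] at hu
  obtain ⟨hc, h0, h1, h2, h3, h4⟩ := hu
  have hcount : ∀ a, u.count a = m a := by
    intro a; fin_cases a <;> assumption
  have hfib : ((hW.toFinset.filter (fun w => rle w = u) : Finset _) : Set (List (Fin 3))) =
      Fib u n := by
    ext w
    simp only [Finset.coe_filter, Set.Finite.mem_toFinset, Set.mem_setOf_eq, Fib, Wds]
    constructor
    · rintro ⟨⟨h, -⟩, h'⟩
      exact ⟨h', h⟩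
    · rintro ⟨h, h'⟩
      refine ⟨⟨h', ?_, ?_, ?_⟩, h⟩
      · intro a; rw [h, hcount]
      · rw [← rle_head?, h, h3]
      · rw [← rle_getLast?, h, h4]
  have := fib_encard _ u n rfl hc
  rw [← hfib, Set.encard_coe_eq_coe_finsetCard] at this
  have := ENat.coe_inj.1 this
  rw [this]
  simp only [hcount]
/-! ### Run counts -/

def wd (f : ℕ → Fin 3) (n : ℕ) : List (Fin 3) := (List.range n).map f

lemma wd_succ (f : ℕ → Fin 3) (n : ℕ) : wd f (n + 1) = f 0 :: wd (fun i => f (i + 1)) n := by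
  simp [wd, List.range_succ_eq_map]

lemma wd_head (f : ℕ → Fin 3) (n : ℕ) : (wd f (n + 1)).head? = some (f 0) := by
  simp [wd_succ]

lemma wd_last (f : ℕ → Fin 3) (n : ℕ) : (wd f (n + 1)).getLast? = some (f n) := by
  simp [wd, List.range_succ]

lemma wd_count (f : ℕ → Fin 3) (n : ℕ) (a : Fin 3) :
    (wd f n).count a = ∑ i ∈ Finset.range n, if f i = a then 1 else 0 := by
  induction n with
  | zero => simp [wd]
  | succ n ih =>
    rw [Finset.sum_range_succ, ← ih]
    simp [wd, List.range_succ, List.count_cons]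

lemma wd_runs (a : Fin 3) (n : ℕ) : ∀ f : ℕ → Fin 3,
    2 * (rle (wd f (n + 1))).count a =
      (∑ i ∈ Finset.range n, if (f (i + 1) = a ↔ f i = a) then 0 else 1) +
      ((if f 0 = a then 1 else 0) + (if f n = a then 1 else 0)) := by
  induction n with
  | zero =>
    intro f
    simp [wd, rle, List.count_cons]
    split_ifs <;> rfl
  | succ n ih =>
    intro f
    have h := ih (fun i => f (i + 1))
    rw [Finset.sum_range_succ']
    rw [wd_succ f (n + 1)]
    obtain ⟨r, hr⟩ : ∃ r, wd (fun i => f (i + 1)) (n + 1) = f 1 :: r := ⟨_, wd_succ _ _⟩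
    rw [hr] at h ⊢
    simp only [rle, zero_add] at h ⊢
    by_cases h01 : f 0 = f 1
    · simp only [h01, if_true] at h ⊢
      simp
      omega
    · simp only [h01, if_false, List.count_cons]
      by_cases h0 : f 0 = a <;> by_cases h1 : f 1 = a
      · exact absurd (h0.trans h1.symm) h01
      all_goals simp [h0, h1] at h ⊢; omega

/-! ### Linear algebra of the cycle `R` -/

def SS (t : ℕ) (y : ℕ → ℝ) (i : ℕ) : ℝ :=
  ∑ k ∈ Finset.range t, y k * (if i < k then -1 else 1)

lemma SS_diff (t : ℕ) (y : ℕ → ℝ) (i : ℕ) (hi : i + 1 < t) :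
    SS t y (i + 1) - SS t y i = 2 * y (i + 1) := by
  rw [SS, SS, ← Finset.sum_sub_distrib, Finset.sum_eq_single (i + 1)]
  · simp; ring
  · intro k _ hk
    by_cases h : i < k
    · have : i + 1 < k := by omega
      simp [h, this]
    · have : ¬ i + 1 < k := by omega
      simp [h, this]
  · intro h; simp at h; omega

lemma SS_ends (n : ℕ) (y : ℕ → ℝ) :
    SS (n + 1) y 0 + SS (n + 1) y n = 2 * y 0 := by
  rw [SS, SS, ← Finset.sum_add_distrib, Finset.sum_eq_single 0]
  · simp; ring
  · intro k hk hk0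
    have h1 : 0 < k := by omega
    have h2 : ¬ n < k := by simp at hk; omega
    simp [h1, h2]
  · intro h; simp at h

def xc (n : ℕ) (T : ℕ → ℝ) : ℕ → ℝ
  | 0 => (T 0 + T n) / 2
  | k + 1 => (T (k + 1) - T k) / 2

lemma SS_uniq (n : ℕ) (y T : ℕ → ℝ) (h : ∀ i ≤ n, SS (n + 1) y i = T i) :
    ∀ k ≤ n, y k = xc n T k := by
  intro k hk
  cases k with
  | zero =>
    have := SS_ends n y
    rw [h 0 (by omega), h n le_rfl] at this
    simp only [xc]; linarith
  | succ k =>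
    have := SS_diff (n + 1) y k (by omega)
    rw [h _ hk, h k (by omega)] at this
    simp only [xc]; linarith

lemma SS_exist (n : ℕ) (T : ℕ → ℝ) : ∀ i ≤ n, SS (n + 1) (xc n T) i = T i := by
  have h1 : ∀ i ≤ n, SS (n + 1) (xc n T) i - T i = SS (n + 1) (xc n T) 0 - T 0 := by
    intro i
    induction i with
    | zero => intro _; rfl
    | succ i ih =>
      intro hi
      have := SS_diff (n + 1) (xc n T) i (by omega)
      have h2 := ih (by omega)
      simp only [xc] at this
      linarith
  have h2 := SS_ends n (xc n T)
  have h3 := h1 n le_rfl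
  simp only [xc] at h2
  intro i hi
  have := h1 i hi
  linarith

lemma smul_Rvec_inj (n : ℕ) (k l : ℕ) (hk : k ≤ n) (hl : l ≤ n) (x y : ℝ)
    (hx : x ≠ 0) (h : x • Rvec (n + 1) k = y • Rvec (n + 1) l) : k = l ∧ x = y := by
  have hlast := congrFun h ⟨n, by omega⟩
  have h1 : ¬ n < k := by omega
  have h2 : ¬ n < l := by omega
  simp only [Pi.smul_apply, Rvec, h1, h2, if_false, smul_eq_mul, mul_one] at hlast
  refine ⟨?_, hlast⟩
  subst hlast
  rcases lt_trichotomy k l with hlt | heq | hlt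
  · have := congrFun h ⟨k, by omega⟩
    simp [Rvec, hlt] at this
    exfalso; apply hx; linarith
  · exact heq
  · have := congrFun h ⟨l, by omega⟩
    simp [Rvec, hlt] at this
    exfalso; apply hx; linarith

lemma Rcyc_lo (t k : ℕ) (hk : k < t) : Rcyc t k = Rvec t k := by
  simp [Rcyc, Nat.mod_eq_of_lt (show k < 2 * t by omega), hk]

lemma Rcyc_hi (t k : ℕ) (hk : k < t) : Rcyc t (t + k) = - Rvec t k := by
  simp [Rcyc, Nat.mod_eq_of_lt (show t + k < 2 * t by omega)]

lemma Rcyc_inj (n : ℕ) : Set.InjOn (Rcyc (n + 1)) (Finset.range (2 * (n + 1))) := by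
  have key : ∀ k < 2 * (n + 1), ∃ k' ≤ n, ∃ e : ℝ, e ≠ 0 ∧
      Rcyc (n + 1) k = e • Rvec (n + 1) k' ∧ ((e = 1 ∧ k = k') ∨ (e = -1 ∧ k = n + 1 + k')) := by
    intro k hk
    by_cases h : k < n + 1
    · exact ⟨k, by omega, 1, by norm_num, by simp [Rcyc_lo _ _ h], Or.inl ⟨rfl, rfl⟩⟩
    · refine ⟨k - (n + 1), by omega, -1, by norm_num, ?_, Or.inr ⟨rfl, by omega⟩⟩
      rw [neg_one_smul, ← Rcyc_hi _ _ (by omega)]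
      congr 1; omega
  intro k hk l hl h
  simp only [Finset.coe_range, Set.mem_Iio] at hk hl
  obtain ⟨k', hk', e, he, h1, h2⟩ := key k hk
  obtain ⟨l', hl', e', he', h1', h2'⟩ := key l hl
  rw [h1, h1'] at h
  obtain ⟨rfl, rfl⟩ := smul_Rvec_inj n k' l' hk' hl' e e' he h
  rcases h2 with ⟨a, b⟩ | ⟨a, b⟩ <;> rcases h2' with ⟨c, d⟩ | ⟨c, d⟩
  · omega
  · rw [a] at c; norm_num at c
  · rw [a] at c; norm_num at c
  · omega

open Classical in
lemma sum_Q (n : ℕ) (Q : Finset (Vec (n + 1))) (hQ : Q ⊆ VD (n + 1) (Rcyc (n + 1))) :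
    ∑ q ∈ Q, q = ∑ k ∈ Finset.range (n + 1),
      (((if Rvec (n + 1) k ∈ Q then 1 else 0) - (if -Rvec (n + 1) k ∈ Q then 1 else 0) : ℝ)) •
        Rvec (n + 1) k := by
  have h1 : ∑ q ∈ Q, q = ∑ q ∈ VD (n + 1) (Rcyc (n + 1)), if q ∈ Q then q else 0 := by
    rw [← Finset.sum_filter]
    congr 1
    ext q; simp only [Finset.mem_filter]
    exact ⟨fun h => ⟨hQ h, h⟩, fun h => h.2⟩
  rw [h1, VD, Finset.sum_image (Rcyc_inj n), two_mul, Finset.sum_range_add,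
    ← Finset.sum_add_distrib]
  apply Finset.sum_congr rfl
  intro k hk
  rw [Finset.mem_range] at hk
  rw [Rcyc_lo _ _ hk, Rcyc_hi _ _ hk]
  split_ifs <;> simp

lemma sum_smul_Rvec (n : ℕ) (y : ℕ → ℝ) (i : Fin (n + 1)) :
    (∑ k ∈ Finset.range (n + 1), y k • Rvec (n + 1) k) i = SS (n + 1) y i := by
  simp [SS, Finset.sum_apply, Rvec]

lemma qIs_iff (n : ℕ) (A : Finset (Fin (n + 1))) (g : ℕ → Prop) [DecidablePred g]
    (hg : ∀ i : Fin (n + 1), g i ↔ i ∈ A) (ℓ : ℕ) :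
    qIs (n + 1) A ℓ ↔ ℓ = (∑ i ∈ Finset.range n, if (g (i + 1) ↔ g i) then 0 else 1) +
      (if (g 0 ↔ g n) then 1 else 0) := by
  classical
  set T : ℕ → ℝ := fun i => if g i then -1 else 1 with hT
  have hTA : ∀ i : Fin (n + 1), topeOf (n + 1) A i = T i := by
    intro i; simp only [topeOf, hT, hg]
  set x := xc n T with hx
  have hxv : ∀ k, x k = 0 ∨ x k = 1 ∨ x k = -1 := by
    intro k
    cases k with
    | zero => simp only [hx, xc, hT]; split_ifs <;> norm_num
    | succ k => simp only [hx, xc, hT]; split_ifs <;> norm_num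
  set K := (Finset.range (n + 1)).filter (fun k => x k ≠ 0) with hK
  set Q0 : Finset (Vec (n + 1)) := K.image (fun k => x k • Rvec (n + 1) k) with hQ0
  have hinj : Set.InjOn (fun k => x k • Rvec (n + 1) k) K := by
    intro k hk l hl h
    simp only [hK, Finset.coe_filter, Finset.mem_range, Set.mem_setOf_eq] at hk hl
    exact (smul_Rvec_inj n k l (by omega) (by omega) _ _ hk.2 h).1
  have hcard : Q0.card = (∑ i ∈ Finset.range n, if (g (i + 1) ↔ g i) then 0 else 1) +
      (if (g 0 ↔ g n) then 1 else 0) := by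
    rw [hQ0, Finset.card_image_of_injOn hinj, hK, Finset.card_filter, Finset.sum_range_succ']
    congr 1
    · apply Finset.sum_congr rfl
      intro i _
      simp only [hx, xc, hT]
      by_cases h1 : g (i + 1) <;> by_cases h2 : g i <;> simp [h1, h2] <;> norm_num
    · simp only [hx, xc, hT]
      by_cases h1 : g 0 <;> by_cases h2 : g n <;> simp [h1, h2] <;> norm_num
  have hsub : Q0 ⊆ VD (n + 1) (Rcyc (n + 1)) := by
    intro q hq
    simp only [hQ0, hK, Finset.mem_image, Finset.mem_filter, Finset.mem_range] at hq
    obtain ⟨k, ⟨hk, hk0⟩, rfl⟩ := hq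
    simp only [VD, Finset.mem_image, Finset.mem_range]
    rcases hxv k with h | h | h
    · exact absurd h hk0
    · exact ⟨k, by omega, by rw [Rcyc_lo _ _ hk, h, one_smul]⟩
    · exact ⟨n + 1 + k, by omega, by rw [Rcyc_hi _ _ hk, h, neg_one_smul]⟩
  have hsum : ∑ q ∈ Q0, q = topeOf (n + 1) A := by
    rw [hQ0, Finset.sum_image hinj]
    have : ∑ k ∈ K, x k • Rvec (n + 1) k = ∑ k ∈ Finset.range (n + 1), x k • Rvec (n + 1) k := by
      rw [hK]
      apply Finset.sum_filter_of_ne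
      intro k _ h h0
      apply h; simp [h0]
    rw [this]
    funext i
    rw [sum_smul_Rvec, SS_exist n T i (by omega), hTA]
  have hmin : ∀ Q ⊆ VD (n + 1) (Rcyc (n + 1)), ∑ q ∈ Q, q = topeOf (n + 1) A → Q0 ⊆ Q := by
    intro Q hQ hs
    rw [sum_Q n Q hQ] at hs
    set y : ℕ → ℝ := fun k => ((if Rvec (n + 1) k ∈ Q then 1 else 0) -
      (if -Rvec (n + 1) k ∈ Q then 1 else 0) : ℝ) with hy
    have hyx := SS_uniq n y T (by
      intro i hi
      have := congrFun hs ⟨i, by omega⟩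
      rw [hTA] at this
      rw [← this]
      exact (sum_smul_Rvec n y ⟨i, by omega⟩).symm)
    intro q hq
    simp only [hQ0, hK, Finset.mem_image, Finset.mem_filter, Finset.mem_range] at hq
    obtain ⟨k, ⟨hk, hk0⟩, rfl⟩ := hq
    have h := hyx k (by omega)
    rw [← hx] at h
    simp only [hy] at h
    rcases hxv k with h' | h' | h'
    · exact absurd h' hk0
    · rw [h', one_smul]
      by_contra hc
      rw [h'] at h
      simp only [hc, if_false] at h
      split_ifs at h <;> norm_num at h
    · rw [h', neg_one_smul]
      by_contra hc
      rw [h'] at h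
      simp only [hc, if_false] at h
      split_ifs at h <;> norm_num at h
  rw [← hcard]
  constructor
  · rintro ⟨Q, ⟨h1, h2, h3⟩, rfl⟩
    have h4 := hmin Q h1 h2
    have h5 := h3 Q0 hsub hsum
    rw [Finset.ssubset_iff_subset_ne] at h5
    have : Q0 = Q := by
      by_contra hne
      exact h5 ⟨h4, hne⟩
    rw [this]
  · rintro rfl
    refine ⟨Q0, ⟨hsub, hsum, ?_⟩, rfl⟩
    intro Q' h1 h2 h3
    exact h3.2 (hmin Q' h1 h2)
/-! ### Pairs of sets and words -/

def code {t : ℕ} (p : Finset (Fin t) × Finset (Fin t)) (i : Fin t) : Fin 3 :=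
  if i ∈ p.1 then (if i ∈ p.2 then 0 else 1) else 2

def fe {t : ℕ} (p : Finset (Fin t) × Finset (Fin t)) (i : ℕ) : Fin 3 :=
  if h : i < t then code p ⟨i, h⟩ else 0

def part {t : ℕ} (p : Finset (Fin t) × Finset (Fin t)) (a : Fin 3) : Finset (Fin t) :=
  if a = 0 then p.1 ∩ p.2 else if a = 1 then p.1 \ p.2 else p.2 \ p.1

lemma fe_val {t : ℕ} (p : Finset (Fin t) × Finset (Fin t)) (i : Fin t) : fe p i = code p i := by
  simp [fe]

lemma code_part {t : ℕ} (p : Finset (Fin t) × Finset (Fin t)) (hp : p.1 ∪ p.2 = Finset.univ)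
    (i : Fin t) (a : Fin 3) : code p i = a ↔ i ∈ part p a := by
  have h : i ∈ p.1 ∪ p.2 := by rw [hp]; exact Finset.mem_univ i
  rw [Finset.mem_union] at h
  fin_cases a <;> by_cases h1 : i ∈ p.1 <;> by_cases h2 : i ∈ p.2 <;>
    simp [code, part, h1, h2] at h ⊢

lemma count_part {t : ℕ} (p : Finset (Fin t) × Finset (Fin t)) (hp : p.1 ∪ p.2 = Finset.univ)
    (a : Fin 3) : (wd (fe p) t).count a = (part p a).card := by
  rw [wd_count, Finset.sum_range]
  simp only [fe_val, code_part p hp]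
  simp

lemma runs_part (n : ℕ) (p : Finset (Fin (n + 1)) × Finset (Fin (n + 1)))
    (hp : p.1 ∪ p.2 = Finset.univ) (a : Fin 3) (ℓ m : ℕ)
    (hm : 2 * m + 1 = ℓ + if (fe p 0 = a ∨ fe p n = a) then 2 else 0) :
    qIs (n + 1) (part p a) ℓ ↔ (rle (wd (fe p) (n + 1))).count a = m := by
  rw [qIs_iff n (part p a) (fun i => fe p i = a)
    (by intro i; rw [fe_val, code_part p hp])]
  have h := wd_runs a n (fe p)
  generalize (∑ i ∈ Finset.range n, if (fe p (i + 1) = a ↔ fe p i = a) then 0 else 1) = s at h ⊢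
  by_cases h1 : fe p 0 = a <;> by_cases h2 : fe p n = a <;> simp [h1, h2] at h hm ⊢ <;> omega

lemma comp_cc (m n : ℕ) (z : ℤ) (hz : z = n) (hn : 1 ≤ n) : comp m z = cc m n := by
  subst hz
  obtain ⟨k, rfl⟩ := Nat.exists_eq_succ_of_ne_zero (show n ≠ 0 by omega)
  cases m with
  | zero => simp [comp, cc]
  | succ m => simp [comp, cc]

lemma comp_zero (m : ℕ) (z : ℤ) (hz : z ≤ 0) : comp m z = 0 := by
  rw [comp, if_neg]; omega

lemma card_rel {t : ℕ} (p : Finset (Fin t) × Finset (Fin t)) (hp : p.1 ∪ p.2 = Finset.univ) :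
    (part p 0).card + t = p.1.card + p.2.card ∧ (part p 1).card + p.2.card = t ∧
    (part p 2).card + p.1.card = t := by
  have h1 := Finset.card_union_add_card_inter p.1 p.2
  have h2 := Finset.card_sdiff_add_card p.1 p.2
  have h3 := Finset.card_sdiff_add_card p.2 p.1
  rw [Finset.union_comm p.2 p.1] at h3
  rw [hp, Finset.card_univ, Fintype.card_fin] at h1 h2 h3
  simp only [part]
  simp
  omega

def Pr (n : ℕ) (s' s'' : Fin 3) (j' j'' : ℕ) (a b c : ℕ) :
    Set (Finset (Fin (n + 1)) × Finset (Fin (n + 1))) :=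
  { p | p.1.card = j' ∧ p.2.card = j'' ∧ 0 < (p.1 ∩ p.2).card ∧ j' < n + 1 ∧ j'' < n + 1 ∧
    p.1 ∪ p.2 = Finset.univ ∧ qIs (n + 1) (p.1 ∩ p.2) a ∧ qIs (n + 1) (p.1 \ p.2) b ∧
    qIs (n + 1) (p.2 \ p.1) c ∧ fe p 0 = s' ∧ fe p n = s'' }

lemma wd_eq_self (w : List (Fin 3)) (f : ℕ → Fin 3) (h : ∀ i (hi : i < w.length), f i = w[i]) :
    wd f w.length = w := by
  apply List.ext_getElem
  · simp [wd]
  · intro i h1 h2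
    simp [wd, h i h2]

lemma code_surj (t : ℕ) (w : List (Fin 3)) (hw : w.length = t) :
    ∃ p : Finset (Fin t) × Finset (Fin t), p.1 ∪ p.2 = Finset.univ ∧ wd (fe p) t = w := by
  subst hw
  refine ⟨(Finset.univ.filter (fun i => w[i] ≠ 2), Finset.univ.filter (fun i => w[i] ≠ 1)), ?_, ?_⟩
  · ext i
    simp only [Finset.mem_union, Finset.mem_filter, Finset.mem_univ, true_and, iff_true]
    by_cases h : w[i] = 2
    · right; rw [h]; decide
    · left; exact h
  · apply wd_eq_self
    intro i hi
    simp only [fe, hi, dif_pos, code, Finset.mem_filter, Finset.mem_univ, true_and]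
    simp only [Fin.getElem_fin]
    generalize w[i] = x
    revert x; decide

lemma pr_ncard (n : ℕ) (s' s'' : Fin 3) (j' j'' a b c k i j : ℕ)
    (hk : 2 * k + 1 = a + if (s' = 0 ∨ s'' = 0) then 2 else 0)
    (hi : 2 * i + 1 = b + if (s' = 1 ∨ s'' = 1) then 2 else 0)
    (hj : 2 * j + 1 = c + if (s' = 2 ∨ s'' = 2) then 2 else 0) :
    (Pr n s' s'' j' j'' a b c).ncard = Tm s' s'' k i j *
      comp k ((j' : ℤ) + (j'' : ℤ) - ((n + 1 : ℕ) : ℤ)) *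
      comp i (((n + 1 : ℕ) : ℤ) - (j'' : ℤ)) * comp j (((n + 1 : ℕ) : ℤ) - (j' : ℤ)) := by
  by_cases hgood : j' < n + 1 ∧ j'' < n + 1 ∧ n + 1 < j' + j''
  swap
  · have hE : Pr n s' s'' j' j'' a b c = ∅ := by
      ext p
      simp only [Set.mem_empty_iff_false, iff_false]
      rintro ⟨h1, h2, h3, h4, h5, h6, -⟩
      have := (card_rel p h6).1
      simp only [part, if_true] at this
      omega
    rw [hE, Set.ncard_empty]
    by_cases h1 : j' < n + 1
    · by_cases h2 : j'' < n + 1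
      · rw [comp_zero k _ (by omega)]; simp
      · rw [comp_zero i _ (by omega)]; simp
    · rw [comp_zero j _ (by omega)]; simp
  obtain ⟨g1, g2, g3⟩ := hgood
  rw [comp_cc k (j' + j'' - (n + 1)) _ (by omega) (by omega),
    comp_cc i (n + 1 - j'') _ (by omega) (by omega),
    comp_cc j (n + 1 - j') _ (by omega) (by omega)]
  have hw := wds_ncard s' s'' ![k, i, j] ![j' + j'' - (n + 1), n + 1 - j'', n + 1 - j']
  rw [Fin.prod_univ_three] at hw
  simp only [Matrix.cons_val_zero, Matrix.cons_val_one, Matrix.cons_val] at hw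
  rw [mul_assoc, mul_assoc, ← mul_assoc (cc k _), ← hw]
  have himg : Wds s' s'' ![k, i, j] ![j' + j'' - (n + 1), n + 1 - j'', n + 1 - j'] =
      (fun p => wd (fe p) (n + 1)) '' Pr n s' s'' j' j'' a b c := by
    have key : ∀ p : Finset (Fin (n + 1)) × Finset (Fin (n + 1)), p.1 ∪ p.2 = Finset.univ →
        (wd (fe p) (n + 1) ∈
          Wds s' s'' ![k, i, j] ![j' + j'' - (n + 1), n + 1 - j'', n + 1 - j'] ↔
          p ∈ Pr n s' s'' j' j'' a b c) := by
      intro p hp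
      have hcr := card_rel p hp
      have hp0 : p.1 ∩ p.2 = part p 0 := rfl
      have hp1 : p.1 \ p.2 = part p 1 := rfl
      have hp2 : p.2 \ p.1 = part p 2 := rfl
      simp only [Wds, Pr, Set.mem_setOf_eq, wd_head, wd_last, Option.some.injEq,
        Fin.forall_fin_succ, count_part p hp, hp0, hp1, hp2]
      simp only [Fin.forall_fin_zero_pi, IsEmpty.forall_iff, and_true, Fin.succ_zero_eq_one,
        Matrix.cons_val_zero, Matrix.cons_val_one, Matrix.cons_val, Fin.succ_one_eq_two]
      constructor
      · rintro ⟨⟨c0, c1, c2⟩, ⟨r0, r1, r2⟩, rfl, rfl⟩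
        refine ⟨by omega, by omega, by omega, g1, g2, hp, ?_, ?_, ?_, rfl, rfl⟩
        · exact (runs_part n p hp 0 a k hk).2 r0
        · exact (runs_part n p hp 1 b i hi).2 r1
        · exact (runs_part n p hp 2 c j hj).2 r2
      · rintro ⟨h1, h2, h3, -, -, -, q0, q1, q2, rfl, rfl⟩
        refine ⟨⟨by omega, by omega, by omega⟩, ⟨?_, ?_, ?_⟩, rfl, rfl⟩
        · exact (runs_part n p hp 0 a k hk).1 q0
        · exact (runs_part n p hp 1 b i hi).1 q1
        · exact (runs_part n p hp 2 c j hj).1 q2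
    ext w
    constructor
    · intro h
      have hlen : w.length = n + 1 := by
        rw [length_eq_counts, h.1, h.1, h.1]
        simp
        omega
      obtain ⟨p, hp, rfl⟩ := code_surj (n + 1) w hlen
      exact ⟨p, (key p hp).1 h, rfl⟩
    · rintro ⟨p, hp, rfl⟩
      exact (key p hp.2.2.2.2.2.1).2 hp
  rw [himg, Set.ncard_image_of_injOn]
  intro p hp p' hp' h
  have hu := hp.2.2.2.2.2.1
  have hu' := hp'.2.2.2.2.2.1
  have hcode : ∀ i : Fin (n + 1), code p i = code p' i := by
    intro i
    have h' : (wd (fe p) (n + 1))[(i : ℕ)]? = (wd (fe p') (n + 1))[(i : ℕ)]? := by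
      simp only at h
      rw [h]
    simpa [wd, fe_val, List.getElem?_range i.isLt] using h'
  have hm : ∀ i : Fin (n + 1), (i ∈ p.1 ↔ i ∈ p'.1) ∧ (i ∈ p.2 ↔ i ∈ p'.2) := by
    intro i
    have h0 := hcode i
    have h1 : i ∈ p.1 ∪ p.2 := by rw [hu]; exact Finset.mem_univ i
    have h2 : i ∈ p'.1 ∪ p'.2 := by rw [hu']; exact Finset.mem_univ i
    rw [Finset.mem_union] at h1 h2
    by_cases a1 : i ∈ p.1 <;> by_cases a2 : i ∈ p.2 <;> by_cases a3 : i ∈ p'.1 <;>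
      by_cases a4 : i ∈ p'.2 <;> simp [code, a1, a2, a3, a4] at h0 h1 h2 ⊢
  exact Prod.ext (Finset.ext fun i => (hm i).1) (Finset.ext fun i => (hm i).2)

lemma inter_both {t : ℕ} (x y : Fin t) (A : Finset (Fin t)) :
    (({x, y} : Finset (Fin t)) ∩ A = {x, y}) ↔ (x ∈ A ∧ y ∈ A) := by
  rw [Finset.inter_eq_left, Finset.insert_subset_iff, Finset.singleton_subset_iff]

lemma inter_none {t : ℕ} (x y : Fin t) (A : Finset (Fin t)) :
    (({x, y} : Finset (Fin t)) ∩ A = ∅) ↔ (x ∉ A ∧ y ∉ A) := by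
  rw [← Finset.disjoint_iff_inter_eq_empty]; simp

lemma inter_left {t : ℕ} (x y : Fin t) (hxy : x ≠ y) (A : Finset (Fin t)) :
    (({x, y} : Finset (Fin t)) ∩ A = {x}) ↔ (x ∈ A ∧ y ∉ A) := by
  by_cases h1 : x ∈ A <;> by_cases h2 : y ∈ A <;>
    simp [h1, h2, Finset.ext_iff, hxy] <;> grind

lemma inter_right {t : ℕ} (x y : Fin t) (hxy : x ≠ y) (A : Finset (Fin t)) :
    (({x, y} : Finset (Fin t)) ∩ A = {y}) ↔ (x ∉ A ∧ y ∈ A) := by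
  rw [Finset.pair_comm, inter_left y x hxy.symm]; tauto

lemma fe_first (n : ℕ) (p : Finset (Fin (n + 1)) × Finset (Fin (n + 1))) :
    fe p 0 = code p ⟨0, by omega⟩ := by simp [fe]

lemma fe_last (n : ℕ) (p : Finset (Fin (n + 1)) × Finset (Fin (n + 1))) :
    fe p n = code p ⟨n, by omega⟩ := by simp [fe]

lemma code_iff {t : ℕ} (p : Finset (Fin t) × Finset (Fin t)) (hp : p.1 ∪ p.2 = Finset.univ)
    (i : Fin t) : (code p i = 0 ↔ (i ∈ p.1 ∧ i ∈ p.2)) ∧ (code p i = 1 ↔ (i ∈ p.1 ∧ i ∉ p.2)) ∧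
      (code p i = 2 ↔ (i ∉ p.1 ∧ i ∈ p.2)) := by
  rw [code_part p hp, code_part p hp, code_part p hp]
  simp [part]
  tauto

/-- counts of ordered two-member intersecting Sperner families covering `[t]`,
refined by `q(A∩B)`, `q(A-B)`, `q(B-A)` and the traces of `A` and `B` on `{1,t}`. -/
theorem stmt14 (t j' j'' ℓcap ℓ' ℓ'' : ℕ) (ht : 3 ≤ t)
    (hoddc : Odd ℓcap) (hlec : ℓcap ≤ t)
    (hodd' : Odd ℓ') (hle' : ℓ' ≤ t) (hodd'' : Odd ℓ'') (hle'' : ℓ'' ≤ t)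
    (S1 S2 S3 S4 S5 : Set (Finset (Fin t) × Finset (Fin t)))
    (hS1 : S1 = { p : Finset (Fin t) × Finset (Fin t) | p.1.card = j' ∧ p.2.card = j'' ∧ 0 < (p.1 ∩ p.2).card ∧ j' < t ∧ j'' < t ∧ p.1 ∪ p.2 = Finset.univ ∧ qIs t (p.1 ∩ p.2) ℓcap ∧ qIs t (p.1 \ p.2) ℓ' ∧ qIs t (p.2 \ p.1) ℓ'' ∧ ({⟨0, by omega⟩, ⟨t - 1, by omega⟩} : Finset (Fin t)) ∩ p.1 = ({⟨0, by omega⟩} : Finset (Fin t)) ∧ ({⟨0, by omega⟩, ⟨t - 1, by omega⟩} : Finset (Fin t)) ∩ p.2 = ({⟨0, by omega⟩, ⟨t - 1, by omega⟩} : Finset (Fin t)) })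
    (hS2 : S2 = { p : Finset (Fin t) × Finset (Fin t) | p.1.card = j' ∧ p.2.card = j'' ∧ 0 < (p.1 ∩ p.2).card ∧ j' < t ∧ j'' < t ∧ p.1 ∪ p.2 = Finset.univ ∧ qIs t (p.1 ∩ p.2) ℓcap ∧ qIs t (p.1 \ p.2) ℓ' ∧ qIs t (p.2 \ p.1) ℓ'' ∧ ({⟨0, by omega⟩, ⟨t - 1, by omega⟩} : Finset (Fin t)) ∩ p.1 = ({⟨0, by omega⟩} : Finset (Fin t)) ∧ ({⟨0, by omega⟩, ⟨t - 1, by omega⟩} : Finset (Fin t)) ∩ p.2 = ({⟨t - 1, by omega⟩} : Finset (Fin t)) })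
    (hS3 : S3 = { p : Finset (Fin t) × Finset (Fin t) | p.1.card = j' ∧ p.2.card = j'' ∧ 0 < (p.1 ∩ p.2).card ∧ j' < t ∧ j'' < t ∧ p.1 ∪ p.2 = Finset.univ ∧ qIs t (p.1 ∩ p.2) ℓcap ∧ qIs t (p.1 \ p.2) ℓ' ∧ qIs t (p.2 \ p.1) ℓ'' ∧ ({⟨0, by omega⟩, ⟨t - 1, by omega⟩} : Finset (Fin t)) ∩ p.1 = ({⟨0, by omega⟩, ⟨t - 1, by omega⟩} : Finset (Fin t)) ∧ ({⟨0, by omega⟩, ⟨t - 1, by omega⟩} : Finset (Fin t)) ∩ p.2 = ({⟨0, by omega⟩, ⟨t - 1, by omega⟩} : Finset (Fin t)) })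
    (hS4 : S4 = { p : Finset (Fin t) × Finset (Fin t) | p.1.card = j' ∧ p.2.card = j'' ∧ 0 < (p.1 ∩ p.2).card ∧ j' < t ∧ j'' < t ∧ p.1 ∪ p.2 = Finset.univ ∧ qIs t (p.1 ∩ p.2) ℓcap ∧ qIs t (p.1 \ p.2) ℓ' ∧ qIs t (p.2 \ p.1) ℓ'' ∧ ({⟨0, by omega⟩, ⟨t - 1, by omega⟩} : Finset (Fin t)) ∩ p.1 = ({⟨0, by omega⟩, ⟨t - 1, by omega⟩} : Finset (Fin t)) ∧ ({⟨0, by omega⟩, ⟨t - 1, by omega⟩} : Finset (Fin t)) ∩ p.2 = ∅ })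
    (hS5 : S5 = { p : Finset (Fin t) × Finset (Fin t) | p.1.card = j' ∧ p.2.card = j'' ∧ 0 < (p.1 ∩ p.2).card ∧ j' < t ∧ j'' < t ∧ p.1 ∪ p.2 = Finset.univ ∧ qIs t (p.1 ∩ p.2) ℓcap ∧ qIs t (p.1 \ p.2) ℓ' ∧ qIs t (p.2 \ p.1) ℓ'' ∧ ({⟨0, by omega⟩, ⟨t - 1, by omega⟩} : Finset (Fin t)) ∩ p.1 = ({⟨0, by omega⟩, ⟨t - 1, by omega⟩} : Finset (Fin t)) ∧ ({⟨0, by omega⟩, ⟨t - 1, by omega⟩} : Finset (Fin t)) ∩ p.2 = ({⟨t - 1, by omega⟩} : Finset (Fin t)) })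
    : S1.ncard = Tm 0 2 ((ℓcap + 1) / 2) ((ℓ' - 1) / 2) ((ℓ'' + 1) / 2) * comp ((ℓcap + 1) / 2) ((j' : ℤ) + (j'' : ℤ) - (t : ℤ)) * comp ((ℓ' - 1) / 2) ((t : ℤ) - (j'' : ℤ)) * comp ((ℓ'' + 1) / 2) ((t : ℤ) - (j' : ℤ)) ∧
      S2.ncard = Tm 1 2 ((ℓcap - 1) / 2) ((ℓ' + 1) / 2) ((ℓ'' + 1) / 2) * comp ((ℓcap - 1) / 2) ((j' : ℤ) + (j'' : ℤ) - (t : ℤ)) * comp ((ℓ' + 1) / 2) ((t : ℤ) - (j'' : ℤ)) * comp ((ℓ'' + 1) / 2) ((t : ℤ) - (j' : ℤ)) ∧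
      S3.ncard = Tm 0 0 ((ℓcap + 1) / 2) ((ℓ' - 1) / 2) ((ℓ'' - 1) / 2) * comp ((ℓcap + 1) / 2) ((j' : ℤ) + (j'' : ℤ) - (t : ℤ)) * comp ((ℓ' - 1) / 2) ((t : ℤ) - (j'' : ℤ)) * comp ((ℓ'' - 1) / 2) ((t : ℤ) - (j' : ℤ)) ∧
      S4.ncard = Tm 1 1 ((ℓcap - 1) / 2) ((ℓ' + 1) / 2) ((ℓ'' - 1) / 2) * comp ((ℓcap - 1) / 2) ((j' : ℤ) + (j'' : ℤ) - (t : ℤ)) * comp ((ℓ' + 1) / 2) ((t : ℤ) - (j'' : ℤ)) * comp ((ℓ'' - 1) / 2) ((t : ℤ) - (j' : ℤ)) ∧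
      S5.ncard = Tm 1 0 ((ℓcap + 1) / 2) ((ℓ' + 1) / 2) ((ℓ'' - 1) / 2) * comp ((ℓcap + 1) / 2) ((j' : ℤ) + (j'' : ℤ) - (t : ℤ)) * comp ((ℓ' + 1) / 2) ((t : ℤ) - (j'' : ℤ)) * comp ((ℓ'' - 1) / 2) ((t : ℤ) - (j' : ℤ)) := by
  obtain ⟨n, rfl⟩ : ∃ n, t = n + 1 := ⟨t - 1, by omega⟩
  obtain ⟨x, rfl⟩ := hoddc
  obtain ⟨y, rfl⟩ := hodd'
  obtain ⟨z, rfl⟩ := hodd''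
  have hne : (⟨0, by omega⟩ : Fin (n + 1)) ≠ ⟨n, by omega⟩ := by
    intro h
    have := congrArg Fin.val h
    simp at this
    omega
  simp only [Nat.add_sub_cancel, inter_both, inter_none, inter_left _ _ hne,
    inter_right _ _ hne] at hS1 hS2 hS3 hS4 hS5
  refine ⟨?_, ?_, ?_, ?_, ?_⟩
  · rw [← pr_ncard n 0 2 j' j'' (2 * x + 1) (2 * y + 1) (2 * z + 1) _ _ _
      (by simp; omega) (by simp) (by simp; omega)]
    congr 1
    rw [hS1]
    ext p
    simp only [Pr, Set.mem_setOf_eq, fe_first, fe_last]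
    have := code_iff p
    grind
  · rw [← pr_ncard n 1 2 j' j'' (2 * x + 1) (2 * y + 1) (2 * z + 1) _ _ _
      (by simp) (by simp; omega) (by simp; omega)]
    congr 1
    rw [hS2]
    ext p
    simp only [Pr, Set.mem_setOf_eq, fe_first, fe_last]
    have := code_iff p
    grind
  · rw [← pr_ncard n 0 0 j' j'' (2 * x + 1) (2 * y + 1) (2 * z + 1) _ _ _
      (by simp; omega) (by simp) (by simp)]
    congr 1
    rw [hS3]
    ext p
    simp only [Pr, Set.mem_setOf_eq, fe_first, fe_last]
    have := code_iff p
    grind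
  · rw [← pr_ncard n 1 1 j' j'' (2 * x + 1) (2 * y + 1) (2 * z + 1) _ _ _
      (by simp) (by simp; omega) (by simp)]
    congr 1
    rw [hS4]
    ext p
    simp only [Pr, Set.mem_setOf_eq, fe_first, fe_last]
    have := code_iff p
    grind
  · rw [← pr_ncard n 1 0 j' j'' (2 * x + 1) (2 * y + 1) (2 * z + 1) _ _ _
      (by simp; omega) (by simp; omega) (by simp)]
    congr 1
    rw [hS5]
    ext p
    simp only [Pr, Set.mem_setOf_eq, fe_first, fe_last]
    have := code_iff p
    grind
end
end
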